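/- Let 1 ≤ k ≤ n, m ≥ k, and η ∈ [0,1]. Suppose the degree distribution is the binomial distribution Ω_d = C(n,d)/(2^n−1) for 1 ≤ d ≤ n, so that each LT row is uniformly distributed over the 2^n−1 nonzero vectors of GF(2)^n. Write q = (2^{n−1} − 1)/(2^n − 1). Then, with the random pre-code matrix G_pre (systematic (n,k,η) LDPC generator) and the random m×n LT matrix G_LT with i.i.d. LT rows independent of G_pre, the probability that the m×k product matrix G_LT·G_pre over GF(2) has rank k is at most 1 − (2^k − 1)·q^m + (2^k − 1)(2^{k−1} − 1)·( q^3 + (1−q)^3 )^m. -/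

import Mathlib

/-!
The product `G * A` has full column rank iff no nonzero `x` satisfies `G *ᵥ (A *ᵥ x) = 0`, so the
second Bonferroni inequality bounds the success probability by `1 - S₁ + S₂`, with `S₁` and `S₂`
the sums of the probabilities of these events and of their pairwise intersections. The systematic
pre-code is injective and any two distinct nonzero vectors over GF(2) are linearly independent, so
only the probability that all `m` LT rows are orthogonal to `r` independent vectors matters. As an
LT row is a uniform nonzero vector, it equals `((2 ^ n / 2 ^ r - 1) / (2 ^ n - 1)) ^ m`: this is
`q ^ m` for `r = 1`, and for `r = 2` the base is at most `1 / 4`, the minimum over `q` of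
`q ^ 3 + (1 - q) ^ 3`.
-/

open Finset

noncomputable section

/-- Probability of a particular realization of a matrix with i.i.d. Bernoulli(η) entries
(each entry equals `1` with probability `η`). -/
def preProb (η : ℝ) {l i : ℕ} (P : Matrix (Fin l) (Fin i) (ZMod 2)) : ℝ :=
  ∏ a : Fin l, ∏ b : Fin i, if P a b = 1 then η else 1 - η

/-- Probability of a particular LT row under degree distribution Ω: a degree
`d ∈ {1,...,n}` is drawn with probability `Ω d`, then the row is uniform among the
`C(n,d)` vectors of Hamming weight `d`. -/
def ltRowProb (n : ℕ) (Ω : ℕ → ℝ) (g : Fin n → ZMod 2) : ℝ :=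
  if hammingNorm g = 0 then 0 else Ω (hammingNorm g) / (n.choose (hammingNorm g) : ℝ)

/-- Probability of a particular LT matrix (i.i.d. LT rows). -/
def ltProb (n : ℕ) (Ω : ℕ → ℝ) {m : ℕ} (G : Matrix (Fin m) (Fin n) (ZMod 2)) : ℝ :=
  ∏ i : Fin m, ltRowProb n Ω (G i)

/-- The systematic pre-code generator matrix `[I_k ; P]` (identity on top of `P`). -/
def Gpre {n k : ℕ} (hkn : k ≤ n) (P : Matrix (Fin (n - k)) (Fin k) (ZMod 2)) :
    Matrix (Fin n) (Fin k) (ZMod 2) :=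
  Matrix.of fun a b =>
    if ha : (a : ℕ) < k then (if (a : ℕ) = (b : ℕ) then 1 else 0)
    else P ⟨(a : ℕ) - k, by have := a.isLt; omega⟩ b

/-- `J(r) = ∑_{d=1}^{n} Ω_d (∑_{s even, 0 ≤ s ≤ d} C(r,s) C(n−r,d−s)) / C(n,d)`. -/
def J (n : ℕ) (Ω : ℕ → ℝ) (r : ℕ) : ℝ :=
  ∑ d ∈ Finset.Icc 1 n, Ω d *
    (∑ s ∈ (Finset.range (d + 1)).filter (fun s => Even s),
        (r.choose s : ℝ) * ((n - r).choose (d - s) : ℝ)) / (n.choose d : ℝ)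

/-- `D(i,r) = C(n−k, r−i) ((1+(1−2η)^i)/2)^{n−k−(r−i)} ((1−(1−2η)^i)/2)^{r−i}`. -/
def D (n k : ℕ) (η : ℝ) (i r : ℕ) : ℝ :=
  ((n - k).choose (r - i) : ℝ) * ((1 + (1 - 2 * η) ^ i) / 2) ^ (n - k - (r - i)) *
    ((1 - (1 - 2 * η) ^ i) / 2) ^ (r - i)

open scoped Matrix

theorem sum_filter_forall_not_le_bonferroni {Ω ι : Type*} [Fintype Ω] {w : Ω → ℝ}
    (hw : ∀ ω, 0 ≤ w ω) (s : Finset ι) (E : ι → Ω → Prop)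
    [∀ i, DecidablePred (E i)] :
    ∑ ω with ∀ i ∈ s, ¬ E i ω, w ω ≤
      ∑ ω, w ω - ∑ i ∈ s, ∑ ω with E i ω, w ω +
        (∑ p ∈ s.offDiag, ∑ ω with E p.1 ω ∧ E p.2 ω, w ω) / 2 := by
  classical
  -- Where exactly `N` of the events occur, this says `[N = 0] ≤ 1 - N + N * (N - 1) / 2`.
  have pointwise (ω : Ω) :
      (if ∀ i ∈ s, ¬ E i ω then w ω else 0) ≤
        w ω - ∑ i ∈ s, (if E i ω then w ω else 0) +
          (∑ p ∈ s.offDiag, if E p.1 ω ∧ E p.2 ω then w ω else 0) / 2 := by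
    have offDiag_filter : {p ∈ s.offDiag | E p.1 ω ∧ E p.2 ω} = {i ∈ s | E i ω}.offDiag := by
      grind
    rw [← sum_filter, ← sum_filter, offDiag_filter]
    simp only [← filter_eq_empty_iff, sum_const, nsmul_eq_mul, ← card_eq_zero, offDiag_card,
      Nat.cast_sub (Nat.le_mul_self _), Nat.cast_mul]
    generalize #{i ∈ s | E i ω} = N
    obtain _ | _ | N := N
    · simp
    · simp
    · have : 0 ≤ (N : ℝ) * (N + 1) / 2 * w ω := mul_nonneg (by positivity) (hw ω)
      push_cast
      linarith
  simp only [sum_filter]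
  rw [sum_comm (s := s), sum_comm (s := s.offDiag), ← sum_sub_distrib, sum_div, ← sum_add_distrib]
  exact sum_le_sum fun ω _ ↦ pointwise ω

theorem sum_prod_filter_forall {α R : Type*} [Fintype α] [CommSemiring R] (f : α → R)
    (p : α → Prop) [DecidablePred p] (m : ℕ) :
    ∑ G : Fin m → α with ∀ i, p (G i), ∏ i, f (G i) = (∑ a with p a, f a) ^ m := by
  classical
  rw [sum_pow']
  congr 1
  ext G
  simp

section LinearAlgebra

variable {K : Type*} [Field K]

theorem rank_eq_card_iff_mulVec_ne_zero {m n : Type*} [Fintype n] (M : Matrix m n K) :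
    M.rank = Fintype.card n ↔ ∀ x ≠ 0, M *ᵥ x ≠ 0 := by
  have rank_nullity := M.mulVecLin.finrank_range_add_finrank_ker
  rw [Module.finrank_fintype_fun_eq_card] at rank_nullity
  have ker_eq_bot : M.rank = Fintype.card n ↔ M.mulVecLin.ker = ⊥ := by
    rw [Matrix.rank, ← Submodule.finrank_eq_zero (R := K)]
    omega
  rw [ker_eq_bot, Matrix.ker_mulVecLin_eq_bot_iff]
  exact forall_congr' fun x ↦ not_imp_not.symm

theorem card_orthogonal_mul {ι n : Type*} [Fintype K] [DecidableEq K] [Fintype ι] [Fintype n]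
    [DecidableEq n] {v : ι → n → K} (hv : LinearIndependent K v) :
    #{g : n → K | ∀ j, g ⬝ᵥ v j = 0} * Fintype.card K ^ Fintype.card ι =
      Fintype.card K ^ Fintype.card n := by
  classical
  set f := (Matrix.of v).mulVecLin
  have card_ker : #{g : n → K | ∀ j, g ⬝ᵥ v j = 0} = Fintype.card f.ker := by
    rw [← Fintype.card_subtype]
    refine Fintype.card_congr (Equiv.subtypeEquivRight fun g ↦ ?_)
    simp [f, funext_iff, Matrix.mulVec, dotProduct_comm g]
  have rank_eq : Module.finrank K f.range = Fintype.card ι := hv.rank_matrix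
  rw [card_ker, Module.card_eq_pow_finrank (K := K), ← pow_add, ← rank_eq, add_comm,
    f.finrank_range_add_finrank_ker, Module.finrank_fintype_fun_eq_card]

theorem linearIndependent_pair_zmod_two {V : Type*} [AddCommGroup V] [Module (ZMod 2) V] {x y : V}
    (hx : x ≠ 0) (hy : y ≠ 0) (hxy : x ≠ y) : LinearIndependent (ZMod 2) ![x, y] := by
  rw [LinearIndependent.pair_iff' hx]
  intro a
  obtain rfl | rfl : a = 0 ∨ a = 1 := by decide +revert
  · simpa using hy.symm
  · simpa using hxy

end LinearAlgebra

section PreCode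

variable {η : ℝ} {l k : ℕ}

theorem preProb_nonneg (hη0 : 0 ≤ η) (hη1 : η ≤ 1) (P : Matrix (Fin l) (Fin k) (ZMod 2)) :
    0 ≤ preProb η P := by
  refine prod_nonneg fun a _ ↦ prod_nonneg fun b _ ↦ ?_
  split_ifs <;> linarith

theorem sum_preProb (η : ℝ) : ∑ P : Matrix (Fin l) (Fin k) (ZMod 2), preProb η P = 1 := by
  have sum_entry : ∑ a : ZMod 2, (if a = 1 then η else 1 - η) = 1 := by
    rw [show (univ : Finset (ZMod 2)) = {0, 1} from rfl]
    simp
  have sum_row : ∑ r : Fin k → ZMod 2, ∏ b, (if r b = 1 then η else 1 - η) = 1 := by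
    rw [← Fintype.sum_pow (fun a : ZMod 2 ↦ if a = 1 then η else 1 - η), sum_entry, one_pow]
  calc ∑ P : Matrix (Fin l) (Fin k) (ZMod 2), preProb η P
      = (∑ r : Fin k → ZMod 2, ∏ b, if r b = 1 then η else 1 - η) ^ l :=
        (Fintype.sum_pow (fun r : Fin k → ZMod 2 ↦ ∏ b, if r b = 1 then η else 1 - η) l).symm
    _ = 1 := by rw [sum_row, one_pow]

theorem Gpre_mulVec_injective {n : ℕ} (hkn : k ≤ n) (P : Matrix (Fin (n - k)) (Fin k) (ZMod 2)) :
    Function.Injective (Gpre hkn P).mulVec := by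
  intro x y hxy
  ext b
  simpa [Matrix.mulVec, dotProduct, Gpre, Fin.val_inj] using congrFun hxy (Fin.castLE hkn b)

end PreCode

/-- The binomial degree distribution, for which LT rows are uniform nonzero vectors. -/
def binomialDegree (n d : ℕ) : ℝ :=
  n.choose d / ((2 : ℝ) ^ n - 1)

/-- The probability `q` that a uniform nonzero vector of `GF(2)ⁿ` is orthogonal to a given nonzero
vector, for `1 ≤ n`. -/
def orthogonalProb (n : ℕ) : ℝ :=
  ((2 : ℝ) ^ (n - 1) - 1) / ((2 : ℝ) ^ n - 1)

section LT

variable {n m : ℕ}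

theorem ltRowProb_binomialDegree (g : Fin n → ZMod 2) :
    ltRowProb n (binomialDegree n) g = if g = 0 then 0 else ((2 : ℝ) ^ n - 1)⁻¹ := by
  have weight_le : hammingNorm g ≤ n := by simpa using hammingNorm_le_card_fintype (x := g)
  have choose_ne_zero : (n.choose (hammingNorm g) : ℝ) ≠ 0 :=
    mod_cast (Nat.choose_pos weight_le).ne'
  simp only [ltRowProb, binomialDegree, hammingNorm_eq_zero]
  field_simp

theorem ltRowProb_binomialDegree_nonneg (g : Fin n → ZMod 2) :
    0 ≤ ltRowProb n (binomialDegree n) g := by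
  have : (1 : ℝ) ≤ 2 ^ n := one_le_pow₀ one_le_two
  rw [ltRowProb_binomialDegree]
  split_ifs
  · rfl
  · exact inv_nonneg.2 (by linarith)

theorem ltProb_binomialDegree_nonneg (G : Matrix (Fin m) (Fin n) (ZMod 2)) :
    0 ≤ ltProb n (binomialDegree n) G :=
  prod_nonneg fun i _ ↦ ltRowProb_binomialDegree_nonneg (G i)

theorem sum_ltRowProb_binomialDegree {s : Finset (Fin n → ZMod 2)} (hs : 0 ∈ s) :
    ∑ g ∈ s, ltRowProb n (binomialDegree n) g = (#s - 1) / ((2 : ℝ) ^ n - 1) := by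
  simp only [ltRowProb_binomialDegree]
  rw [sum_ite, sum_const_zero, zero_add, filter_ne', sum_const, card_erase_of_mem hs,
    nsmul_eq_mul, Nat.cast_pred (card_pos.2 ⟨0, hs⟩), div_eq_mul_inv]

theorem sum_ltProb_filter_forall_row (Ω : ℕ → ℝ) (p : (Fin n → ZMod 2) → Prop) [DecidablePred p] :
    ∑ G : Matrix (Fin m) (Fin n) (ZMod 2) with ∀ i, p (G.row i), ltProb n Ω G =
      (∑ g with p g, ltRowProb n Ω g) ^ m :=
  sum_prod_filter_forall _ _ _

variable {ι : Type*} [Fintype ι] {v : ι → Fin n → ZMod 2}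

theorem sum_ltRowProb_orthogonal (hv : LinearIndependent (ZMod 2) v) :
    ∑ g with ∀ j, g ⬝ᵥ v j = 0, ltRowProb n (binomialDegree n) g =
      ((2 : ℝ) ^ n / 2 ^ Fintype.card ι - 1) / ((2 : ℝ) ^ n - 1) := by
  have card_eq : (#{g : Fin n → ZMod 2 | ∀ j, g ⬝ᵥ v j = 0} : ℝ) = 2 ^ n / 2 ^ Fintype.card ι := by
    rw [eq_div_iff (by positivity)]
    simpa using congrArg (Nat.cast (R := ℝ)) (card_orthogonal_mul hv)
  rw [sum_ltRowProb_binomialDegree (by simp), card_eq]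

theorem sum_ltProb_mulVec_eq_zero (hv : LinearIndependent (ZMod 2) v) :
    ∑ G : Matrix (Fin m) (Fin n) (ZMod 2) with ∀ j, G *ᵥ v j = 0, ltProb n (binomialDegree n) G =
      (((2 : ℝ) ^ n / 2 ^ Fintype.card ι - 1) / ((2 : ℝ) ^ n - 1)) ^ m := by
  have mulVec_iff (G : Matrix (Fin m) (Fin n) (ZMod 2)) :
      (∀ j, G *ᵥ v j = 0) ↔ ∀ i j, G.row i ⬝ᵥ v j = 0 := by
    simp only [funext_iff]
    exact forall_comm
  simp only [mulVec_iff]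
  rw [sum_ltProb_filter_forall_row _ fun g ↦ ∀ j, g ⬝ᵥ v j = 0, sum_ltRowProb_orthogonal hv]

theorem sum_ltProb_binomialDegree (hn : 1 ≤ n) :
    ∑ G : Matrix (Fin m) (Fin n) (ZMod 2), ltProb n (binomialDegree n) G = 1 := by
  have : (1 : ℝ) < 2 ^ n := one_lt_pow₀ one_lt_two (by omega)
  have := sum_ltProb_mulVec_eq_zero (m := m)
    (linearIndependent_empty_type (R := ZMod 2) (v := (Empty.elim : Empty → Fin n → ZMod 2)))
  rw [Fintype.card_empty, pow_zero, div_one, div_self (by linarith), one_pow] at this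
  simpa using this

theorem sum_ltProb_mulVec_eq_zero_of_ne_zero {u : Fin n → ZMod 2} (hu : u ≠ 0) :
    ∑ G : Matrix (Fin m) (Fin n) (ZMod 2) with G *ᵥ u = 0, ltProb n (binomialDegree n) G =
      orthogonalProb n ^ m := by
  obtain ⟨i, -⟩ := Function.ne_iff.1 hu
  have := sum_ltProb_mulVec_eq_zero (m := m)
    (LinearIndependent.of_subsingleton (R := ZMod 2) (v := fun _ : Unit ↦ u) () hu)
  rw [orthogonalProb, pow_sub₀ _ two_ne_zero i.pos, ← div_eq_mul_inv]
  simpa using this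

theorem sum_ltProb_mulVec_pair_eq_zero_le {u v : Fin n → ZMod 2}
    (huv : LinearIndependent (ZMod 2) ![u, v]) :
    ∑ G : Matrix (Fin m) (Fin n) (ZMod 2) with G *ᵥ u = 0 ∧ G *ᵥ v = 0,
        ltProb n (binomialDegree n) G ≤
      (orthogonalProb n ^ 3 + (1 - orthogonalProb n) ^ 3) ^ m := by
  have one_le : (1 : ℝ) ≤ 2 ^ n := one_le_pow₀ one_le_two
  have base_nonneg : 0 ≤ ((2 : ℝ) ^ n / 2 ^ Fintype.card (Fin 2) - 1) / ((2 : ℝ) ^ n - 1) := by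
    rw [← sum_ltRowProb_orthogonal huv]
    exact sum_nonneg fun g _ ↦ ltRowProb_binomialDegree_nonneg g
  have base_le : ((2 : ℝ) ^ n / 2 ^ Fintype.card (Fin 2) - 1) / ((2 : ℝ) ^ n - 1) ≤ 1 / 4 := by
    rw [Fintype.card_fin]
    exact div_le_of_le_mul₀ (by linarith) (by norm_num) (by linarith)
  have quarter_le (q : ℝ) : 1 / 4 ≤ q ^ 3 + (1 - q) ^ 3 := by
    linarith [mul_self_nonneg (2 * q - 1)]
  calc _ = (((2 : ℝ) ^ n / 2 ^ Fintype.card (Fin 2) - 1) / ((2 : ℝ) ^ n - 1)) ^ m := by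
        simpa using sum_ltProb_mulVec_eq_zero (m := m) huv
    _ ≤ _ := pow_le_pow_left₀ base_nonneg (base_le.trans (quarter_le _)) m

end LT

section FullRank

theorem card_univ_erase_zero (k : ℕ) :
    (#((univ : Finset (Fin k → ZMod 2)).erase 0) : ℝ) = 2 ^ k - 1 := by
  simp [card_erase_of_mem]

theorem card_offDiag_univ_erase_zero {k : ℕ} (hk : 1 ≤ k) :
    (#((univ : Finset (Fin k → ZMod 2)).erase 0).offDiag : ℝ) =
      2 * ((2 ^ k - 1) * (2 ^ (k - 1) - 1)) := by
  rw [offDiag_card, Nat.cast_sub (Nat.le_mul_self _), Nat.cast_mul, card_univ_erase_zero,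
    pow_sub₀ _ two_ne_zero hk]
  ring

variable {n k m : ℕ} {A : Matrix (Fin n) (Fin k) (ZMod 2)}

theorem sum_sum_ltProb_mulVec_eq_zero (hA : Function.Injective A.mulVec) :
    ∑ x ∈ univ.erase 0, ∑ G : Matrix (Fin m) (Fin n) (ZMod 2) with G *ᵥ (A *ᵥ x) = 0,
        ltProb n (binomialDegree n) G =
      ((2 : ℝ) ^ k - 1) * orthogonalProb n ^ m := by
  rw [← card_univ_erase_zero, ← nsmul_eq_mul]
  refine sum_eq_card_nsmul fun x hx ↦ sum_ltProb_mulVec_eq_zero_of_ne_zero ?_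
  exact (hA.ne_iff' A.mulVec_zero).2 (ne_of_mem_erase hx)

theorem sum_offDiag_sum_ltProb_mulVec_eq_zero_le (hk : 1 ≤ k) (hA : Function.Injective A.mulVec) :
    ∑ p ∈ (univ.erase 0).offDiag, ∑ G : Matrix (Fin m) (Fin n) (ZMod 2) with
        G *ᵥ (A *ᵥ p.1) = 0 ∧ G *ᵥ (A *ᵥ p.2) = 0, ltProb n (binomialDegree n) G ≤
      2 * (((2 : ℝ) ^ k - 1) * ((2 : ℝ) ^ (k - 1) - 1)) *
        (orthogonalProb n ^ 3 + (1 - orthogonalProb n) ^ 3) ^ m := by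
  rw [← card_offDiag_univ_erase_zero hk, ← nsmul_eq_mul]
  refine sum_le_card_nsmul _ _ _ fun p hp ↦ sum_ltProb_mulVec_pair_eq_zero_le ?_
  obtain ⟨hx, hy, hxy⟩ := mem_offDiag.1 hp
  exact linearIndependent_pair_zmod_two ((hA.ne_iff' A.mulVec_zero).2 (ne_of_mem_erase hx))
    ((hA.ne_iff' A.mulVec_zero).2 (ne_of_mem_erase hy)) (hA.ne hxy)

theorem sum_ltProb_rank_eq_le (hk : 1 ≤ k) (hA : Function.Injective A.mulVec) :
    ∑ G : Matrix (Fin m) (Fin n) (ZMod 2) with (G * A).rank = k, ltProb n (binomialDegree n) G ≤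
      1 - ((2 : ℝ) ^ k - 1) * orthogonalProb n ^ m +
        ((2 : ℝ) ^ k - 1) * ((2 : ℝ) ^ (k - 1) - 1) *
          (orthogonalProb n ^ 3 + (1 - orthogonalProb n) ^ 3) ^ m := by
  have k_le_n : k ≤ n := by
    simpa using LinearMap.finrank_le_finrank_of_injective (f := A.mulVecLin) hA
  have rank_iff (G : Matrix (Fin m) (Fin n) (ZMod 2)) :
      (G * A).rank = k ↔ ∀ x ∈ univ.erase 0, ¬ G *ᵥ (A *ᵥ x) = 0 := by
    simpa using rank_eq_card_iff_mulVec_ne_zero (G * A)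
  have bonferroni := sum_filter_forall_not_le_bonferroni
    (ltProb_binomialDegree_nonneg (n := n) (m := m)) (univ.erase 0) fun x G ↦ G *ᵥ (A *ᵥ x) = 0
  simp only [← rank_iff, sum_ltProb_binomialDegree (hk.trans k_le_n),
    sum_sum_ltProb_mulVec_eq_zero hA] at bonferroni
  linarith [sum_offDiag_sum_ltProb_mulVec_eq_zero_le (m := m) hk hA]

end FullRank

theorem raptor_binomial_upper_bound_general {ι : Type*} [Fintype ι] {n k m : ℕ} (hk : 1 ≤ k)
    {w : ι → ℝ} (hw0 : ∀ i, 0 ≤ w i) (hw1 : ∑ i, w i = 1)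
    {A : ι → Matrix (Fin n) (Fin k) (ZMod 2)} (hA : ∀ i, Function.Injective (A i).mulVec) :
    (∑ i, ∑ G : Matrix (Fin m) (Fin n) (ZMod 2),
        if (G * A i).rank = k then w i * ltProb n (binomialDegree n) G else 0) ≤
      1 - ((2 : ℝ) ^ k - 1) * orthogonalProb n ^ m +
        ((2 : ℝ) ^ k - 1) * ((2 : ℝ) ^ (k - 1) - 1) *
          (orthogonalProb n ^ 3 + (1 - orthogonalProb n) ^ 3) ^ m := by
  simp only [← sum_filter, ← mul_sum]
  calc _ ≤ ∑ i, w i * _ :=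
        sum_le_sum fun i _ ↦ mul_le_mul_of_nonneg_left (sum_ltProb_rank_eq_le hk (hA i)) (hw0 i)
    _ = _ := by rw [← sum_mul, hw1, one_mul]

/-- Corollary 2: with the binomial degree distribution
`Ω_d = C(n,d)/(2^n − 1)` and `q = (2^{n−1} − 1)/(2^n − 1)`, the decoding success
probability is at most `1 − (2^k − 1) q^m + (2^k − 1)(2^{k−1} − 1)(q³ + (1−q)³)^m`. -/
theorem raptor_binomial_upper_bound
    (n k m : ℕ) (η : ℝ)
    (hk : 1 ≤ k) (hkn : k ≤ n) (hm : k ≤ m)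
    (hη0 : 0 ≤ η) (hη1 : η ≤ 1) :
    (∑ P : Matrix (Fin (n - k)) (Fin k) (ZMod 2),
        ∑ G : Matrix (Fin m) (Fin n) (ZMod 2),
          if (G * Gpre hkn P).rank = k then
            preProb η P * ltProb n (fun d => (n.choose d : ℝ) / ((2 : ℝ) ^ n - 1)) G
          else 0)
      ≤ 1 - ((2 : ℝ) ^ k - 1) * (((2 : ℝ) ^ (n - 1) - 1) / ((2 : ℝ) ^ n - 1)) ^ m
        + ((2 : ℝ) ^ k - 1) * ((2 : ℝ) ^ (k - 1) - 1) *
            ((((2 : ℝ) ^ (n - 1) - 1) / ((2 : ℝ) ^ n - 1)) ^ 3 +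
              (1 - ((2 : ℝ) ^ (n - 1) - 1) / ((2 : ℝ) ^ n - 1)) ^ 3) ^ m :=
  raptor_binomial_upper_bound_general hk (preProb_nonneg hη0 hη1) (sum_preProb η)
    (Gpre_mulVec_injective hkn)
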